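/- The normal closure K of (ab)² in the first Grigorchuk group absorbs pairs: for all g, h ∈ K, the permutation pair g h belongs to K (i.e. K × K, embedded via pair, is contained in K). -/

import Mathlib

/-!
Write `t = (ab)²`. The argument is that `K` contains `pair t 1`, and that conjugation inside `Γ`
spreads this over all of `K × K`.

* Since `b = pair a c`, `d = pair 1 b` and `bd = c`, one has
  `pair t 1 = (b · ada)² = t⁻¹ · (aca) · t⁻¹ · (aca)⁻¹`, a product of conjugates of `t⁻¹`
  (`pair_t_one`).
* Every `x ∈ Γ` is the first coordinate of some `pair x z ∈ Γ` (`exists_pair_mem`): the generators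
  `a, b, c, d` are the first coordinates of `b, ada, aba, aca`. Conjugating `pair t 1` by `pair x z`
  gives `pair (x t x⁻¹) 1 ∈ K`, hence `pair g 1 ∈ K` for all `g ∈ K`.
* Conjugation by `a` swaps the coordinates, so `pair 1 h ∈ K` as well for `h ∈ K`, and
  `pair g h = pair g 1 * pair 1 h`.
-/

namespace Grigorchuk

/-- Underlying map of the Grigorchuk generator `a`: flip the first letter. -/
def aF : List Bool → List Bool
  | [] => []
  | x :: w => (!x) :: w

mutual
  /-- Underlying map of the Grigorchuk generator `b`. -/
  def bF : List Bool → List Bool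
    | [] => []
    | false :: w => false :: aF w
    | true :: w => true :: cF w
  /-- Underlying map of the Grigorchuk generator `c`. -/
  def cF : List Bool → List Bool
    | [] => []
    | false :: w => false :: aF w
    | true :: w => true :: dF w
  /-- Underlying map of the Grigorchuk generator `d`. -/
  def dF : List Bool → List Bool
    | [] => []
    | false :: w => false :: w
    | true :: w => true :: bF w
end

theorem aF_aF : ∀ w : List Bool, aF (aF w) = w := by
  intro w
  cases w with
  | nil => rfl
  | cons x w => simp [aF]

theorem bcd_invol : ∀ w : List Bool,
    bF (bF w) = w ∧ cF (cF w) = w ∧ dF (dF w) = w := by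
  intro w
  induction w with
  | nil => simp [bF, cF, dF]
  | cons x w ih =>
    cases x <;> simp [bF, cF, dF, aF_aF, ih.1, ih.2.1, ih.2.2]

/-- The Grigorchuk generator `a` as a permutation of `List Bool`. -/
def a : Equiv.Perm (List Bool) := ⟨aF, aF, aF_aF, aF_aF⟩

/-- The Grigorchuk generator `b` as a permutation of `List Bool`. -/
def b : Equiv.Perm (List Bool) :=
  ⟨bF, bF, fun w => (bcd_invol w).1, fun w => (bcd_invol w).1⟩

/-- The Grigorchuk generator `c` as a permutation of `List Bool`. -/
def c : Equiv.Perm (List Bool) :=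
  ⟨cF, cF, fun w => (bcd_invol w).2.1, fun w => (bcd_invol w).2.1⟩

/-- The Grigorchuk generator `d` as a permutation of `List Bool`. -/
def d : Equiv.Perm (List Bool) :=
  ⟨dF, dF, fun w => (bcd_invol w).2.2, fun w => (bcd_invol w).2.2⟩

/-- Underlying map of the pair `(g, h)` acting on the two subtrees. -/
def pairF (g h : List Bool → List Bool) : List Bool → List Bool
  | [] => []
  | false :: w => false :: g w
  | true :: w => true :: h w

/-- The permutation of `List Bool` acting as `g` on the subtree below `false`
and as `h` on the subtree below `true`, fixing the root. -/
def pair (g h : Equiv.Perm (List Bool)) : Equiv.Perm (List Bool) :=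
  ⟨pairF g h, pairF g.symm h.symm,
    fun w => by cases w with
      | nil => rfl
      | cons x w => cases x <;> simp [pairF],
    fun w => by cases w with
      | nil => rfl
      | cons x w => cases x <;> simp [pairF]⟩

/-- The first Grigorchuk group: the subgroup of `Equiv.Perm (List Bool)`
generated by `a`, `b`, `c`, `d`. -/
def Γ : Subgroup (Equiv.Perm (List Bool)) := Subgroup.closure {a, b, c, d}

/-- The normal closure in `Γ` of the element `(a * b)^2`, realized as the subgroup
of `Equiv.Perm (List Bool)` generated by all `Γ`-conjugates of `(a * b)^2`. -/
def K : Subgroup (Equiv.Perm (List Bool)) :=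
  Subgroup.closure {g | ∃ x ∈ Γ, g = x * (a * b) ^ 2 * x⁻¹}

end Grigorchuk

namespace Grigorchuk

theorem pair_mul (g h g' h' : Equiv.Perm (List Bool)) :
    pair g h * pair g' h' = pair (g * g') (h * h') := by
  ext1 w
  rcases w with _ | ⟨_ | _, w⟩ <;> rfl

theorem pair_one : pair 1 1 = 1 := by
  ext1 w
  rcases w with _ | ⟨_ | _, w⟩ <;> rfl

theorem pair_inv (g h : Equiv.Perm (List Bool)) : (pair g h)⁻¹ = pair g⁻¹ h⁻¹ := by
  rw [inv_eq_iff_mul_eq_one, pair_mul, mul_inv_cancel, mul_inv_cancel, pair_one]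

theorem a_inv : a⁻¹ = a := rfl

theorem aF_cons (x : Bool) (w : List Bool) : aF (x :: w) = (!x) :: w := rfl

theorem a_conj_pair (g h : Equiv.Perm (List Bool)) : a * pair g h * a = pair h g := by
  ext1 w
  rcases w with _ | ⟨_ | _, w⟩ <;> rfl

theorem b_eq : b = pair a c := by
  ext1 w
  rcases w with _ | ⟨_ | _, w⟩ <;> simp [b, a, c, pair, pairF, bF]

theorem c_eq : c = pair a d := by
  ext1 w
  rcases w with _ | ⟨_ | _, w⟩ <;> simp [d, a, c, pair, pairF, cF]

theorem d_eq : d = pair 1 b := by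
  ext1 w
  rcases w with _ | ⟨_ | _, w⟩ <;> simp [d, b, pair, pairF, dF]

/-- The relations `cd = b`, `db = c`, `bc = d` of the four-group `{1, b, c, d}`, proved together
because each restricts to the next one on the subtree below `true`. -/
theorem klein (w : List Bool) :
    cF (dF w) = bF w ∧ dF (bF w) = cF w ∧ bF (cF w) = dF w := by
  induction w with
  | nil => simp [bF, cF, dF]
  | cons x w ih =>
    cases x <;> simp [bF, cF, dF, aF_aF, ih.1, ih.2.1, ih.2.2]

theorem pair_t_one :
    pair ((a * b) ^ 2) 1 =
      ((a * b) ^ 2)⁻¹ * ((a * c * a) * ((a * b) ^ 2)⁻¹ * (a * c * a)⁻¹) := by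
  have ha : a⁻¹ = a := rfl
  have hb : b⁻¹ = b := rfl
  have hc : c⁻¹ = c := rfl
  ext1 w
  simp only [pow_two, mul_inv_rev, ha, hb, hc, Equiv.Perm.mul_apply]
  rcases w with _ | ⟨_ | _, w⟩
  · simp [a, b, c, pair, pairF, aF, bF, cF]
  · simp [a, b, c, pair, pairF, aF_cons, bF, cF, klein]
  · simp [a, b, c, pair, pairF, aF_cons, bF, cF, aF_aF, bcd_invol]

theorem a_mem : a ∈ Γ := Subgroup.subset_closure (by simp)
theorem b_mem : b ∈ Γ := Subgroup.subset_closure (by simp)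
theorem c_mem : c ∈ Γ := Subgroup.subset_closure (by simp)
theorem d_mem : d ∈ Γ := Subgroup.subset_closure (by simp)

theorem exists_pair_mem {x : Equiv.Perm (List Bool)} (hx : x ∈ Γ) : ∃ z, pair x z ∈ Γ := by
  have conj {y : Equiv.Perm (List Bool)} (hy : y ∈ Γ) : a * y * a ∈ Γ :=
    Γ.mul_mem (Γ.mul_mem a_mem hy) a_mem
  induction hx using Subgroup.closure_induction with
  | mem x hx =>
    rcases hx with rfl | rfl | rfl | rfl
    · exact ⟨c, b_eq ▸ b_mem⟩
    · exact ⟨1, by simpa only [d_eq, a_conj_pair] using conj d_mem⟩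
    · refine ⟨a, ?_⟩
      have h := conj b_mem
      rwa [b_eq, a_conj_pair] at h
    · refine ⟨a, ?_⟩
      have h := conj c_mem
      rwa [c_eq, a_conj_pair] at h
  | one => exact ⟨1, by simp only [pair_one, Γ.one_mem]⟩
  | mul x y _ _ hx hy =>
    obtain ⟨z, hz⟩ := hx
    obtain ⟨z', hz'⟩ := hy
    exact ⟨z * z', pair_mul x z y z' ▸ Γ.mul_mem hz hz'⟩
  | inv x _ hx =>
    obtain ⟨z, hz⟩ := hx
    exact ⟨z⁻¹, pair_inv x z ▸ Γ.inv_mem hz⟩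

/-- `K` is normalized by `Γ`. -/
theorem conj_mem_K {x g : Equiv.Perm (List Bool)} (hx : x ∈ Γ) (hg : g ∈ K) :
    x * g * x⁻¹ ∈ K := by
  induction hg using Subgroup.closure_induction with
  | mem g hg =>
    obtain ⟨y, hy, rfl⟩ := hg
    exact Subgroup.subset_closure ⟨x * y, Γ.mul_mem hx hy, by group⟩
  | one => simp
  | mul g h _ _ hg hh =>
    rw [← conj_mul]
    exact K.mul_mem hg hh
  | inv g _ hg =>
    rw [← conj_inv]
    exact K.inv_mem hg

theorem t_mem : (a * b) ^ 2 ∈ K := Subgroup.subset_closure ⟨1, Γ.one_mem, by simp⟩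

theorem pair_left_mem {g : Equiv.Perm (List Bool)} (hg : g ∈ K) : pair g 1 ∈ K := by
  induction hg using Subgroup.closure_induction with
  | mem g hg =>
    obtain ⟨x, hx, rfl⟩ := hg
    obtain ⟨z, hz⟩ := exists_pair_mem hx
    have ht : pair ((a * b) ^ 2) 1 ∈ K := by
      rw [pair_t_one]
      exact K.mul_mem (K.inv_mem t_mem)
        (conj_mem_K (Γ.mul_mem (Γ.mul_mem a_mem c_mem) a_mem) (K.inv_mem t_mem))
    have h := conj_mem_K hz ht
    rwa [pair_inv, pair_mul, pair_mul, mul_one, mul_inv_cancel] at h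
  | one => simp only [pair_one, K.one_mem]
  | mul g h _ _ hg hh =>
    have := K.mul_mem hg hh
    rwa [pair_mul, one_mul] at this
  | inv g _ hg =>
    have := K.inv_mem hg
    rwa [pair_inv, inv_one] at this

end Grigorchuk

open Grigorchuk in
/-- The normal closure `K` of `(ab)²` in the first Grigorchuk group absorbs pairs:
if `g, h ∈ K` then `pair g h ∈ K`. -/
theorem grigorchuk_K_pair (g h : Equiv.Perm (List Bool))
    (hg : g ∈ K) (hh : h ∈ K) :
    pair g h ∈ K := by
  have h1 := conj_mem_K a_mem (pair_left_mem hh)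
  rw [a_inv, a_conj_pair] at h1
  have h2 := K.mul_mem (pair_left_mem hg) h1
  rwa [pair_mul, mul_one, one_mul] at h2
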